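/- Let M = f₁f₂ + εD ∈ 𝔻ℍ[t] be a monic translational motion polynomial, where D ∈ ℍ[t] and f₁, f₂ ∈ ℝ[t] are coprime monic real polynomials. Then there exist D₁, D₂ ∈ ℍ[t] such that M₁ := f₁ + εD₁ and M₂ := f₂ + εD₂ are monic translational motion polynomials and M = M₁·M₂. -/

import Mathlib

open Polynomial DualNumber TrivSqZeroExt

noncomputable section

/-- The real quaternions. -/
abbrev Hq : Type := Quaternion ℝ

/-- The dual quaternions. -/
abbrev DHq : Type := DualNumber Hq

/-- Conjugation of a dual quaternion: `(p + ε d)* = p* + ε d*`. -/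
instance : Star DHq := ⟨fun x => inl (star x.fst) + inr (star x.snd)⟩

/-- Coefficient-wise (quaternion) conjugation of a polynomial. -/
def cstar {R : Type*} [Semiring R] [Star R] (A : R[X]) : R[X] :=
  A.sum fun n a => Polynomial.C (star a) * Polynomial.X ^ n

/-- The embedding `ℝ[t] → ℍ[t]`. -/
def qPoly (f : ℝ[X]) : Hq[X] := f.map (algebraMap ℝ Hq)

/-- The embedding `ℍ[t] → 𝔻ℍ[t]` (primal part). -/
def dhQ (P : Hq[X]) : DHq[X] := P.map (inlHom Hq Hq)

/-- The embedding `ℝ[t] → 𝔻ℍ[t]`. -/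
def dPoly (f : ℝ[X]) : DHq[X] := dhQ (qPoly f)

/-- The dual quaternion polynomial `P + ε D` with primal part `P` and dual part `D`. -/
def mp (P D : Hq[X]) : DHq[X] := dhQ P + Polynomial.C ε * dhQ D

/-- The primal part of a dual quaternion polynomial. -/
def primal (A : DHq[X]) : Hq[X] := A.map (fstHom ℝ Hq Hq).toRingHom

/-- A motion polynomial: a dual quaternion polynomial whose norm polynomial
`ν(M) = M·M*` is a nonzero real polynomial. -/
def IsMotion (M : DHq[X]) : Prop := ∃ f : ℝ[X], f ≠ 0 ∧ M * cstar M = dPoly f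

/-- A real polynomial divides a quaternion polynomial. -/
def RDvdQ (f : ℝ[X]) (A : Hq[X]) : Prop := ∃ B : Hq[X], A = qPoly f * B

/-- A real polynomial divides a dual quaternion polynomial. -/
def RDvdD (f : ℝ[X]) (A : DHq[X]) : Prop := ∃ B : DHq[X], A = dPoly f * B

/-- `g` is the greatest common monic real polynomial divisor of a quaternion polynomial `A`
(with itself), i.e. `g = mrpf A`. -/
def IsMrpfQ (g : ℝ[X]) (A : Hq[X]) : Prop :=
  g.Monic ∧ RDvdQ g A ∧ ∀ f : ℝ[X], f.Monic → RDvdQ f A → f ∣ g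

/-- `g` is the greatest common monic real polynomial divisor of `c ∈ ℝ[t]` and a quaternion
polynomial `A`, i.e. `g = mrpf(c, A)`. -/
def IsMrpf2 (g : ℝ[X]) (c : ℝ[X]) (A : Hq[X]) : Prop :=
  g.Monic ∧ g ∣ c ∧ RDvdQ g A ∧
    ∀ f : ℝ[X], f.Monic → f ∣ c → RDvdQ f A → f ∣ g

/-- `g` is the greatest common monic real polynomial divisor of `c ∈ ℝ[t]` and two quaternion
polynomials `A` and `B`, i.e. `g = mrpf(c, A, B)`. -/
def IsMrpf3 (g : ℝ[X]) (c : ℝ[X]) (A B : Hq[X]) : Prop :=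
  g.Monic ∧ g ∣ c ∧ RDvdQ g A ∧ RDvdQ g B ∧
    ∀ f : ℝ[X], f.Monic → f ∣ c → RDvdQ f A → RDvdQ f B → f ∣ g

/-- A quaternion polynomial is reduced: `mrpf = 1`, i.e. it has only constant real
polynomial factors. -/
def ReducedQ (A : Hq[X]) : Prop := ∀ f : ℝ[X], f.Monic → RDvdQ f A → f = 1

/-- A dual quaternion polynomial is reduced: `mrpf = 1`. -/
def ReducedD (A : DHq[X]) : Prop := ∀ f : ℝ[X], f.Monic → RDvdD f A → f = 1

/-- Boundedness of a (monic reduced) motion polynomial: `mrpf` of its primal part has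
no real root, equivalently no linear real polynomial `t - a` divides the primal part. -/
def BoundedD (M : DHq[X]) : Prop :=
  ∀ a : ℝ, ¬ RDvdQ (Polynomial.X - Polynomial.C a) (primal M)

/-- A generic motion polynomial: monic, a motion polynomial, with `mrpf` of the primal
part equal to `1`. -/
def GenericD (M : DHq[X]) : Prop :=
  M.Monic ∧ IsMotion M ∧ ReducedQ (primal M)

/-- The monic linear dual quaternion polynomial `t - p - ε d`. -/
def lin (p d : Hq) : DHq[X] := mp (Polynomial.X - Polynomial.C p) (-Polynomial.C d)

/-- `M` admits a factorization into monic linear motion polynomial factors. -/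
def HasLinFact (M : DHq[X]) : Prop :=
  ∃ L : List DHq, (∀ h ∈ L, IsMotion (Polynomial.X - Polynomial.C h)) ∧
    M = (L.map fun h => Polynomial.X - Polynomial.C h).prod

end

/-!
Since `ε² = 0`, the factorization `f₁f₂ + εD = (f₁ + εD₁)(f₂ + εD₂)` amounts to the linear equation
`D = f₁D₂ + f₂D₁`, a partial fraction decomposition of `D` over the central polynomial `f₁f₂`.
Coprimality of `f₁` and `f₂` gives exactly one solution with `deg Dᵢ < deg fᵢ`. For monic real `f`,
the polynomial `f + εD` is a motion polynomial precisely when `D* = -D`. Conjugation carries the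
solution for `D` to the one for `D* = -D`, so `Dᵢ* = -Dᵢ` by uniqueness.
-/

section Conjugation

lemma coeff_cstar {R : Type*} [Semiring R] [StarAddMonoid R] (A : R[X]) (n : ℕ) :
    (cstar A).coeff n = star (A.coeff n) := by
  simp only [cstar, Polynomial.sum_def, finsetSum_coeff, coeff_C_mul_X_pow]
  rw [Finset.sum_ite_eq A.support n, ite_eq_left_iff, notMem_support_iff]
  exact fun h => by rw [h, star_zero]

lemma cstar_add {R : Type*} [Semiring R] [StarAddMonoid R] (A B : R[X]) :
    cstar (A + B) = cstar A + cstar B := by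
  ext1 n
  simp only [coeff_cstar, coeff_add, star_add]

lemma degree_cstar_le {R : Type*} [Semiring R] [StarAddMonoid R] (A : R[X]) :
    (cstar A).degree ≤ A.degree := by
  refine degree_mono fun n => ?_
  simp only [mem_support_iff, coeff_cstar, ne_eq, star_eq_zero, imp_self]

end Conjugation

section CentralPolynomials

attribute [local instance] Polynomial.algebra

section Semiring

variable {R S : Type*} [CommSemiring R] [Semiring S] [Algebra R S]

lemma coeff_polynomial_smul (f : R[X]) (A : S[X]) (n : ℕ) :
    (f • A).coeff n =
      ∑ ij ∈ Finset.HasAntidiagonal.antidiagonal n, f.coeff ij.1 • A.coeff ij.2 := by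
  simp only [Algebra.smul_def, Polynomial.algebraMap_def, coe_mapRingHom, coeff_mul, coeff_map]

lemma cstar_polynomial_smul [Star R] [TrivialStar R] [StarAddMonoid S] [StarModule R S]
    (f : R[X]) (A : S[X]) : cstar (f • A) = f • cstar A := by
  ext1 n
  simp only [coeff_cstar, coeff_polynomial_smul, star_sum, star_smul, star_trivial]

lemma degree_polynomial_smul_le (f : R[X]) (A : S[X]) : (f • A).degree ≤ f.degree + A.degree := by
  rw [Algebra.smul_def]
  exact (degree_mul_le _ _).trans (by gcongr; exact degree_map_le)

lemma degree_polynomial_smul_of_monic [Nontrivial S] {f : R[X]} (hf : f.Monic) (A : S[X]) :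
    (f • A).degree = f.degree + A.degree := by
  have hf' : (f.map (algebraMap R S)).Monic := hf.map _
  rw [Algebra.smul_def, Polynomial.algebraMap_def, coe_mapRingHom, hf'.degree_mul_comm,
    hf'.degree_mul, hf.degree_map, add_comm]

lemma polynomial_smul_eq_zero_iff_of_monic {f : R[X]} (hf : f.Monic) {A : S[X]} :
    f • A = 0 ↔ A = 0 := by
  rw [Algebra.smul_def]
  exact (hf.map (algebraMap R S)).mul_right_eq_zero_iff

end Semiring

section Ring

variable {R S : Type*} [CommRing R] [Ring S] [Algebra R S]

lemma exists_smul_add_smul_of_isCoprime [Nontrivial S] {f g : R[X]} (hf : f.Monic)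
    (hfg : IsCoprime f g) {D : S[X]} (hD : D.degree < (f * g).degree) :
    ∃ A B : S[X], A.degree < f.degree ∧ B.degree < g.degree ∧ D = f • B + g • A := by
  obtain ⟨u, v, huv⟩ := hfg
  set F := f.map (algebraMap R S)
  have hF : F.Monic := hf.map _
  set A := (v • D) %ₘ F
  set Q := (v • D) /ₘ F
  have hA : A.degree < f.degree := (degree_modByMonic_lt _ hF).trans_eq (hf.degree_map _)
  have hdiv : A + f • Q = v • D := modByMonic_add_div (v • D) F
  have hsplit : D = f • (u • D + g • Q) + g • A := by
    calc D = (u * f + v * g) • D := by rw [huv, one_smul]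
      _ = f • u • D + g • v • D := by module
      _ = f • (u • D + g • Q) + g • A := by rw [← hdiv]; module
  refine ⟨A, u • D + g • Q, hA, ?_, hsplit⟩
  rw [mul_comm, hf.degree_mul, add_comm] at hD
  have hgA : (g • A).degree < f.degree + g.degree := by
    have hg : g.degree ≠ ⊥ := by rintro hg; simp [hg] at hD
    rw [add_comm]
    exact (degree_polynomial_smul_le g A).trans_lt (WithBot.add_lt_add_left hg hA)
  have hfB : (f • (u • D + g • Q)).degree < f.degree + g.degree := by
    rw [eq_sub_of_add_eq hsplit.symm]
    exact (degree_sub_le _ _).trans_lt (max_lt hD hgA)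
  rw [degree_polynomial_smul_of_monic hf] at hfB
  exact lt_of_add_lt_add_left hfB

lemma eq_zero_of_smul_add_smul_eq_zero {f g : R[X]} (hf : f.Monic) (hfg : IsCoprime f g)
    {A B : S[X]} (hA : A.degree < f.degree) (h : f • B + g • A = 0) : A = 0 ∧ B = 0 := by
  obtain ⟨u, v, huv⟩ := hfg
  have hfA : A = f • (u • A - v • B) := by
    calc A = (u * f + v * g) • A := by rw [huv, one_smul]
      _ = f • (u • A - v • B) + v • (f • B + g • A) := by module
      _ = f • (u • A - v • B) := by rw [h, smul_zero, add_zero]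
  have hA0 : A = 0 := by
    nontriviality S
    by_contra hne
    refine (hf.map (algebraMap R S)).not_dvd_of_degree_lt hne ?_ ⟨_, hfA⟩
    rwa [hf.degree_map]
  rw [hA0, smul_zero, add_zero] at h
  exact ⟨hA0, (polynomial_smul_eq_zero_iff_of_monic hf).1 h⟩

lemma exists_skew_smul_add_smul [Star R] [TrivialStar R] [Nontrivial S] [StarAddMonoid S]
    [StarModule R S] {f g : R[X]} (hf : f.Monic) (hfg : IsCoprime f g) {D : S[X]}
    (hD : D.degree < (f * g).degree) (hskew : cstar D + D = 0) :
    ∃ A B : S[X], A.degree < f.degree ∧ B.degree < g.degree ∧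
      cstar A + A = 0 ∧ cstar B + B = 0 ∧ D = f • B + g • A := by
  obtain ⟨A, B, hA, hB, rfl⟩ := exists_smul_add_smul_of_isCoprime hf hfg hD
  have hzero : f • (cstar B + B) + g • (cstar A + A) = 0 := by
    rw [cstar_add, cstar_polynomial_smul, cstar_polynomial_smul] at hskew
    rw [← hskew]
    module
  have hdeg : (cstar A + A).degree < f.degree :=
    (degree_add_le _ _).trans_lt (max_lt ((degree_cstar_le A).trans_lt hA) hA)
  obtain ⟨hA0, hB0⟩ := eq_zero_of_smul_add_smul_eq_zero hf hfg hdeg hzero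
  exact ⟨A, B, hA, hB, hA0, hB0, rfl⟩

end Ring

end CentralPolynomials

section DualQuaternions

attribute [local instance] Polynomial.algebra

lemma fst_star (x : DHq) : (star x).fst = star x.fst := by
  rw [show star x = inl (star x.fst) + inr (star x.snd) from rfl, fst_add, fst_inl, fst_inr,
    add_zero]

lemma snd_star (x : DHq) : (star x).snd = star x.snd := by
  rw [show star x = inl (star x.fst) + inr (star x.snd) from rfl, snd_add, snd_inl, snd_inr,
    zero_add]

noncomputable instance : StarAddMonoid DHq where
  star_involutive x := by ext1 <;> simp only [fst_star, snd_star, star_star]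
  star_add x y := by ext1 <;> simp only [fst_star, snd_star, fst_add, snd_add, star_add]

instance : StarModule ℝ Hq := ⟨Quaternion.star_smul⟩

lemma coeff_mp (P D : Hq[X]) (n : ℕ) : (mp P D).coeff n = inl (P.coeff n) + inr (D.coeff n) := by
  ext1 <;> simp [mp, dhQ]

lemma mp_inj {P D P' D' : Hq[X]} : mp P D = mp P' D' ↔ P = P' ∧ D = D' := by
  simp only [Polynomial.ext_iff, coeff_mp, TrivSqZeroExt.ext_iff, fst_add, fst_inl, fst_inr,
    add_zero, snd_add, snd_inl, snd_inr, zero_add, forall_and]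

lemma mp_mul_mp (P D P' D' : Hq[X]) : mp P D * mp P' D' = mp (P * P') (P * D' + D * P') := by
  ext1 n
  ext1
  · simp [coeff_mul, coeff_mp, fst_sum]
  · simp [coeff_mul, coeff_mp, snd_sum, Finset.sum_add_distrib]

lemma cstar_mp (P D : Hq[X]) : cstar (mp P D) = mp (cstar P) (cstar D) := by
  ext1 n
  simp only [coeff_cstar, coeff_mp]
  ext1 <;> simp [fst_star, snd_star]

lemma degree_C_eps_mul_dhQ (D : Hq[X]) : (Polynomial.C ε * dhQ D).degree = D.degree := by
  have hsupport : (Polynomial.C ε * dhQ D).support = D.support := by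
    ext n
    simp [dhQ, TrivSqZeroExt.ext_iff]
  rw [degree, degree, hsupport]

lemma monic_mp_iff {P D : Hq[X]} (hP : P.Monic) : (mp P D).Monic ↔ D.degree < P.degree := by
  have hP' : (dhQ P).Monic := hP.map _
  have hdegP : (dhQ P).degree = P.degree := hP.degree_map _
  rw [← degree_C_eps_mul_dhQ D, ← hdegP, mp]
  refine ⟨fun h => ?_, hP'.add_of_left⟩
  have hprimal : primal (dhQ P + Polynomial.C ε * dhQ D) = P := by
    ext1 n
    simp [primal, dhQ]
  have hdeg : (dhQ P + Polynomial.C ε * dhQ D).degree = (dhQ P).degree := by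
    rw [hdegP, ← h.degree_map (fstHom ℝ Hq Hq).toRingHom]
    exact congrArg degree hprimal
  simpa using degree_sub_lt_right hdeg hP'.ne_zero (h.leadingCoeff.trans hP'.leadingCoeff.symm)

lemma monic_mp_qPoly_iff {f : ℝ[X]} (hf : f.Monic) {D : Hq[X]} :
    (mp (qPoly f) D).Monic ↔ D.degree < f.degree := by
  have hq : (qPoly f).Monic := hf.map _
  rw [monic_mp_iff hq, qPoly, hf.degree_map]

lemma cstar_qPoly (f : ℝ[X]) : cstar (qPoly f) = qPoly f := by
  ext1 n
  simp [coeff_cstar, qPoly]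

lemma mp_qPoly_mul_mp_qPoly (f g : ℝ[X]) (A B : Hq[X]) :
    mp (qPoly f) A * mp (qPoly g) B = mp (qPoly (f * g)) (f • B + g • A) := by
  have hmap : qPoly (f * g) = qPoly f * qPoly g := Polynomial.map_mul _
  have hleft : qPoly f * B = f • B := (Algebra.smul_def f B).symm
  have hright : A * qPoly g = g • A := (Algebra.commutes g A).symm
  rw [mp_mul_mp, hmap, hleft, hright]

lemma isMotion_mp_qPoly_iff {f : ℝ[X]} (hf : f.Monic) {D : Hq[X]} :
    IsMotion (mp (qPoly f) D) ↔ cstar D + D = 0 := by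
  have hnorm : mp (qPoly f) D * cstar (mp (qPoly f) D) =
      mp (qPoly (f * f)) (f • (cstar D + D)) := by
    rw [cstar_mp, cstar_qPoly, mp_qPoly_mul_mp_qPoly, smul_add]
  have hreal (g : ℝ[X]) : dPoly g = mp (qPoly g) 0 := by simp [dPoly, mp, dhQ]
  simp only [IsMotion, hnorm, hreal, mp_inj, polynomial_smul_eq_zero_iff_of_monic hf]
  exact ⟨fun ⟨_, _, _, h⟩ => h, fun h => ⟨f * f, (hf.mul hf).ne_zero, rfl, h⟩⟩

end DualQuaternions

/-- Factorization of translational motion polynomials along a coprime splitting of the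
primal part. -/
theorem translational_splitting
    (f₁ f₂ : ℝ[X]) (hf₁ : f₁.Monic) (hf₂ : f₂.Monic) (hcop : IsCoprime f₁ f₂)
    (D : Hq[X]) (M : DHq[X]) (hM : M = mp (qPoly (f₁ * f₂)) D)
    (hmonic : M.Monic) (hmotion : IsMotion M) :
    ∃ D₁ D₂ : Hq[X],
      (mp (qPoly f₁) D₁).Monic ∧ IsMotion (mp (qPoly f₁) D₁) ∧
      (mp (qPoly f₂) D₂).Monic ∧ IsMotion (mp (qPoly f₂) D₂) ∧
      M = mp (qPoly f₁) D₁ * mp (qPoly f₂) D₂ := by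
  subst hM
  have hdeg : D.degree < (f₁ * f₂).degree := (monic_mp_qPoly_iff (hf₁.mul hf₂)).1 hmonic
  have hskew : cstar D + D = 0 := (isMotion_mp_qPoly_iff (hf₁.mul hf₂)).1 hmotion
  obtain ⟨D₁, D₂, hdeg₁, hdeg₂, hskew₁, hskew₂, rfl⟩ :=
    exists_skew_smul_add_smul hf₁ hcop hdeg hskew
  exact ⟨D₁, D₂,
    (monic_mp_qPoly_iff hf₁).2 hdeg₁, (isMotion_mp_qPoly_iff hf₁).2 hskew₁,
    (monic_mp_qPoly_iff hf₂).2 hdeg₂, (isMotion_mp_qPoly_iff hf₂).2 hskew₂,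
    (mp_qPoly_mul_mp_qPoly f₁ f₂ D₁ D₂).symm⟩
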